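/- Let S = ⟨S, δ, L⟩ and S' = ⟨S', δ', L'⟩ be FLTSs witnessed w.r.t. f∃ΔPDL and Z a crisp simulation between them. Then for all x, y ∈ S, x' ∈ S', every formula φ of f∃ΔPDL and every program α of f∃ΔPDL: (a) if Z(x,x') holds then φ^S(x) ≤ φ^S'(x'); (b) if Z(x,x') holds and α^S(x,y) > 0, then there exists y' ∈ S' such that α^S(x,y) ≤ α^S'(x',y') and Z(y,y') holds. -/

import Mathlib

open unitInterval

noncomputable section
attribute [local instance] Classical.propDecidable

instance : Fact ((0:ℝ) ≤ 1) := ⟨zero_le_one⟩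

/-- A left-continuous t-norm on the unit interval `[0,1]`: a commutative, associative
binary operation with neutral element `1`, increasing in both arguments, that
distributes over suprema of nonempty sets (left-continuity). -/
structure Tnorm where
  mul : I → I → I
  mul_comm : ∀ x y, mul x y = mul y x
  mul_assoc : ∀ x y z, mul (mul x y) z = mul x (mul y z)
  mul_one : ∀ x, mul x 1 = x
  mul_le_mul : ∀ {a b c d : I}, a ≤ b → c ≤ d → mul a c ≤ mul b d
  left_continuous : ∀ (x : I) (s : Set I), s.Nonempty → mul x (sSup s) = sSup (mul x '' s)

/-- The residuum of a t-norm: `(x ⇒ y) = sup {z | z ⊗ x ≤ y}`. -/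
def Tnorm.res (T : Tnorm) (x y : I) : I := sSup {z : I | T.mul z x ≤ y}

/-- A fuzzy labeled transition system over actions `A`, propositions `P`, states `St`. -/
structure FLTS (A P St : Type) where
  delta : St → A → St → I
  label : St → P → I

/-- A crisp simulation between two FLTSs. -/
def IsSimulation {A P S S' : Type} (M : FLTS A P S) (M' : FLTS A P S')
    (Z : S → S' → Prop) : Prop :=
  (∀ x x', Z x x' → ∀ p, M.label x p ≤ M'.label x' p) ∧
  (∀ x y x' (ρ : A), Z x x' → 0 < M.delta x ρ y →
    ∃ y', M.delta x ρ y ≤ M'.delta x' ρ y' ∧ Z y y')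
mutual
/-- Formulas of f∃ΔPDL. -/
inductive EForm (A P : Type) : Type
  | const : I → EForm A P
  | prop : P → EForm A P
  | baaz : EForm A P → EForm A P
  | and : EForm A P → EForm A P → EForm A P
  | or : EForm A P → EForm A P → EForm A P
  | impl : I → EForm A P → EForm A P
  | dia : EProg A P → EForm A P → EForm A P
/-- Programs of f∃ΔPDL. -/
inductive EProg (A P : Type) : Type
  | act : A → EProg A P
  | comp : EProg A P → EProg A P → EProg A P
  | union : EProg A P → EProg A P → EProg A P
  | star : EProg A P → EProg A P
  | test : EForm A P → EProg A P
end

/-- The ⊗-product of the values of `r` along the path `x :: l`. -/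
def chainProd (T : Tnorm) {St : Type} (r : St → St → I) : St → List St → I
  | _, [] => 1
  | x, y :: l => T.mul (r x y) (chainProd T r y l)

mutual
/-- Semantics of f∃ΔPDL formulas. -/
def eformSem (T : Tnorm) {A P St : Type} (M : FLTS A P St) : EForm A P → St → I
  | .const a, _ => a
  | .prop p, x => M.label x p
  | .baaz φ, x => if eformSem T M φ x = 1 then 1 else 0
  | .and φ ψ, x => min (eformSem T M φ x) (eformSem T M ψ x)
  | .or φ ψ, x => max (eformSem T M φ x) (eformSem T M ψ x)
  | .impl a φ, x => T.res a (eformSem T M φ x)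
  | .dia α φ, x => ⨆ y, T.mul (eprogSem T M α x y) (eformSem T M φ y)
/-- Semantics of f∃ΔPDL programs. -/
def eprogSem (T : Tnorm) {A P St : Type} (M : FLTS A P St) : EProg A P → St → St → I
  | .act ρ, x, y => M.delta x ρ y
  | .comp α β, x, y => ⨆ z, T.mul (eprogSem T M α x z) (eprogSem T M β z y)
  | .union α β, x, y => max (eprogSem T M α x y) (eprogSem T M β x y)
  | .star α, x, y =>
      sSup {v : I | ∃ l : List St, l.getLastD x = y ∧ v = chainProd T (eprogSem T M α) x l}
  | .test φ, x, y => if x = y then eformSem T M φ x else 0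
end

/-- An FLTS is witnessed w.r.t. f∃ΔPDL: every supremum occurring in the semantic
clauses (for `⟨α⟩φ`, `α∘β` and `α*`) is attained by a greatest element. -/
def WitnessedE (T : Tnorm) {A P St : Type} (M : FLTS A P St) : Prop :=
  (∀ (α : EProg A P) (φ : EForm A P) (x : St), ∃ y : St, ∀ z : St,
      T.mul (eprogSem T M α x z) (eformSem T M φ z) ≤
        T.mul (eprogSem T M α x y) (eformSem T M φ y)) ∧
  (∀ (α β : EProg A P) (x y : St), ∃ z : St, ∀ w : St,
      T.mul (eprogSem T M α x w) (eprogSem T M β w y) ≤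
        T.mul (eprogSem T M α x z) (eprogSem T M β z y)) ∧
  (∀ (α : EProg A P) (x y : St), ∃ l : List St, l.getLastD x = y ∧
      ∀ l' : List St, l'.getLastD x = y →
        chainProd T (eprogSem T M α) x l' ≤ chainProd T (eprogSem T M α) x l)

theorem aux_le_sSup (s : Set I) (a : I) (h : a ∈ s) : a ≤ sSup s := le_sSup h

theorem aux_sSup_le (s : Set I) (a : I) (h : ∀ b ∈ s, b ≤ a) : sSup s ≤ a := sSup_le h

theorem aux_le_iSup {ι : Type} (f : ι → I) (i : ι) : f i ≤ ⨆ j, f j :=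
  aux_le_sSup _ _ ⟨i, rfl⟩

theorem aux_iSup_le {ι : Type} (f : ι → I) (a : I) (h : ∀ i, f i ≤ a) : ⨆ j, f j ≤ a :=
  aux_sSup_le _ _ (by rintro _ ⟨i, rfl⟩; exact h i)

theorem Tnorm.le_left (T : Tnorm) (a b : I) : T.mul a b ≤ a := by
  have h := T.mul_le_mul (le_refl a) (le_top : b ≤ ⊤)
  have h1 : (⊤ : I) = 1 := rfl
  rwa [h1, T.mul_one] at h

theorem Tnorm.le_right (T : Tnorm) (a b : I) : T.mul a b ≤ b := by
  rw [T.mul_comm]; exact T.le_left b a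

theorem aux_chain (T : Tnorm) {S S' : Type} (Z : S → S' → Prop)
    (r : S → S → I) (r' : S' → S' → I)
    (h : ∀ x y x', Z x x' → 0 < r x y → ∃ y', r x y ≤ r' x' y' ∧ Z y y') :
    ∀ (l : List S) (x : S) (x' : S'), Z x x' → 0 < chainProd T r x l →
      ∃ l' : List S', chainProd T r x l ≤ chainProd T r' x' l' ∧
        Z (l.getLastD x) (l'.getLastD x')
  | [], x, x', hx, _ => ⟨[], le_refl _, hx⟩
  | y :: l, x, x', hx, h0 => by
      simp only [chainProd] at h0 ⊢
      obtain ⟨y', h1, h2⟩ := h x y x' hx (lt_of_lt_of_le h0 (T.le_left _ _))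
      obtain ⟨l', h3, h4⟩ :=
        aux_chain T Z r r' h l y y' h2 (lt_of_lt_of_le h0 (T.le_right _ _))
      refine ⟨y' :: l', ?_, ?_⟩
      · simp only [chainProd]
        exact T.mul_le_mul h1 h3
      · simpa only [List.getLastD_cons] using h4

mutual
theorem aux_form {A P S S' : Type} (T : Tnorm) (M : FLTS A P S) (M' : FLTS A P S')
    (hM : WitnessedE T M) (Z : S → S' → Prop) (hZ : IsSimulation M M' Z) :
    ∀ (φ : EForm A P) (x : S) (x' : S'), Z x x' → eformSem T M φ x ≤ eformSem T M' φ x'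
  | .const a, x, x', _ => by simp only [eformSem]; exact le_refl _
  | .prop p, x, x', hx => by simp only [eformSem]; exact hZ.1 x x' hx p
  | .baaz φ, x, x', hx => by
      have ih := aux_form T M M' hM Z hZ φ x x' hx
      simp only [eformSem]
      by_cases h : eformSem T M φ x = 1
      · have h' : eformSem T M' φ x' = 1 := le_antisymm le_top (h ▸ ih)
        rw [if_pos h, if_pos h']
      · rw [if_neg h]; exact bot_le
  | .and φ ψ, x, x', hx => by
      simp only [eformSem]
      exact min_le_min (aux_form T M M' hM Z hZ φ x x' hx) (aux_form T M M' hM Z hZ ψ x x' hx)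
  | .or φ ψ, x, x', hx => by
      simp only [eformSem]
      exact max_le_max (aux_form T M M' hM Z hZ φ x x' hx) (aux_form T M M' hM Z hZ ψ x x' hx)
  | .impl a φ, x, x', hx => by
      have ih := aux_form T M M' hM Z hZ φ x x' hx
      simp only [eformSem, Tnorm.res]
      exact aux_sSup_le _ _ fun b hb => aux_le_sSup _ _ (le_trans hb ih)
  | .dia α φ, x, x', hx => by
      simp only [eformSem]
      refine aux_iSup_le _ _ fun y => ?_
      by_cases h0 : 0 < eprogSem T M α x y
      · obtain ⟨y', h1, h2⟩ := aux_prog T M M' hM Z hZ α x y x' hx h0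
        exact le_trans (T.mul_le_mul h1 (aux_form T M M' hM Z hZ φ y y' h2))
          (aux_le_iSup (fun y => T.mul (eprogSem T M' α x' y) (eformSem T M' φ y)) y')
      · exact le_trans (T.le_left _ _) (le_trans (not_lt.mp h0) bot_le)
theorem aux_prog {A P S S' : Type} (T : Tnorm) (M : FLTS A P S) (M' : FLTS A P S')
    (hM : WitnessedE T M) (Z : S → S' → Prop) (hZ : IsSimulation M M' Z) :
    ∀ (α : EProg A P) (x y : S) (x' : S'), Z x x' → 0 < eprogSem T M α x y →
        ∃ y' : S', eprogSem T M α x y ≤ eprogSem T M' α x' y' ∧ Z y y'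
  | .act ρ, x, y, x', hx, h0 => by
      simp only [eprogSem] at h0 ⊢; exact hZ.2 x y x' ρ hx h0
  | .comp α β, x, y, x', hx, h0 => by
      simp only [eprogSem] at h0 ⊢
      obtain ⟨z, hz⟩ := hM.2.1 α β x y
      have hle := aux_iSup_le _ _ hz
      have h1 := lt_of_lt_of_le h0 hle
      obtain ⟨z', h2, h3⟩ := aux_prog T M M' hM Z hZ α x z x' hx
        (lt_of_lt_of_le h1 (T.le_left _ _))
      obtain ⟨y', h4, h5⟩ := aux_prog T M M' hM Z hZ β z y z' h3
        (lt_of_lt_of_le h1 (T.le_right _ _))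
      exact ⟨y', le_trans hle (le_trans (T.mul_le_mul h2 h4)
        (aux_le_iSup (fun z => T.mul (eprogSem T M' α x' z) (eprogSem T M' β z y')) z')), h5⟩
  | .union α β, x, y, x', hx, h0 => by
      simp only [eprogSem] at h0 ⊢
      rcases le_total (eprogSem T M α x y) (eprogSem T M β x y) with h | h
      · rw [max_eq_right h] at h0 ⊢
        obtain ⟨y', h1, h2⟩ := aux_prog T M M' hM Z hZ β x y x' hx h0
        exact ⟨y', le_trans h1 (le_max_right _ _), h2⟩
      · rw [max_eq_left h] at h0 ⊢
        obtain ⟨y', h1, h2⟩ := aux_prog T M M' hM Z hZ α x y x' hx h0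
        exact ⟨y', le_trans h1 (le_max_left _ _), h2⟩
  | .star α, x, y, x', hx, h0 => by
      have ih := aux_prog T M M' hM Z hZ α
      simp only [eprogSem] at h0 ⊢
      obtain ⟨l, hl, hmax⟩ := hM.2.2 α x y
      have hle := aux_sSup_le
        {v : I | ∃ l : List S, l.getLastD x = y ∧ v = chainProd T (eprogSem T M α) x l} _
        (by rintro _ ⟨l', h', rfl⟩; exact hmax l' h')
      obtain ⟨l', h1, h2⟩ := aux_chain T Z _ _ ih l x x' hx (lt_of_lt_of_le h0 hle)
      rw [hl] at h2
      exact ⟨l'.getLastD x', le_trans hle (le_trans h1 (aux_le_sSup _ _ ⟨l', rfl, rfl⟩)), h2⟩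
  | .test φ, x, y, x', hx, h0 => by
      have ih := aux_form T M M' hM Z hZ φ x x' hx
      simp only [eprogSem] at h0 ⊢
      by_cases h : x = y
      · subst h
        refine ⟨x', ?_, hx⟩
        rw [if_pos rfl, if_pos rfl]; exact ih
      · rw [if_neg h] at h0; exact absurd h0 (lt_irrefl _)
end

/-- Lemma on preservation under crisp simulations between FLTSs witnessed w.r.t.
f∃ΔPDL: (a) formulas are preserved, and (b) positive program transitions can be
matched with at least as large degrees. -/
theorem preservation_lemma_simulation_fePDL
    {A P S S' : Type} [Nonempty A] [Nonempty P] [Nonempty S] [Nonempty S']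
    (T : Tnorm) (M : FLTS A P S) (M' : FLTS A P S')
    (hM : WitnessedE T M) (hM' : WitnessedE T M')
    (Z : S → S' → Prop) (hZ : IsSimulation M M' Z) :
    (∀ (φ : EForm A P) (x : S) (x' : S'),
      Z x x' → eformSem T M φ x ≤ eformSem T M' φ x') ∧
    (∀ (α : EProg A P) (x y : S) (x' : S'),
      Z x x' → 0 < eprogSem T M α x y →
        ∃ y' : S', eprogSem T M α x y ≤ eprogSem T M' α x' y' ∧ Z y y') := by
  exact ⟨aux_form T M M' hM Z hZ, aux_prog T M M' hM Z hZ⟩
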